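/- arXiv:1702.08173 — 3 statements merged into one kernel-verified Lean document; each statement's English description precedes it below -/
import Mathlib

section
/- Let G be a torsion group containing an involution i whose centralizer C_G(i) is finite. Then either there exists an involution j in G that commutes with i and has finite conjugacy class, or every element g of G can be written as g = c·a where c ∈ C_G(i) and a is an element of G with finite conjugacy class (that is, G = C_G(i)·FC(G)). -/
/-! Call a property of elements of `G` generic if it holds outside finitely many left cosets of
subgroups of infinite index. By B. H. Neumann's covering lemma a generic property holds somewhere,
and if `a` has infinitely many conjugates, then `g * a * g⁻¹ ≠ b` for generic `g`.

For any `g`, the involutions `i` and `g⁻¹ * i * g` generate a finite dihedral group, so either they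
commute with a common involution or they are conjugate in it by an element inverted by `i`.
If no involution of the finite group `C_G(i)` has a finite conjugacy class, the first case does not
occur for generic `g`, and the second says that `g = c * y` with `c ∈ C_G(i)` and `y` inverted
by `i`. If `a` is inverted by `i`, then for generic `y` inverted by `i` also `a * y = c * y'` is
such a product, and inverting both sides by `i` yields `y * (a * c) * y⁻¹ = c⁻¹ * a`. As there are
finitely many `c`, some `a * c` has finitely many conjugates. Thus generic elements lie in
the subgroup `C_G(i) ⊔ FC(G)`, and every `g` is `(g * h) * h⁻¹` with `h` and `g * h` both generic.
-/

open Filter Subgroup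
open scoped Pointwise commutatorElement

section FCCenter

variable {G : Type*} [Group G]

variable (G) in
/-- The FC-center of a group: the subgroup of the elements with finitely many conjugates. -/
def fcCenter : Subgroup G where
  carrier := {a | (conjugatesOf a).Finite}
  one_mem' := (Set.finite_singleton 1).subset fun _ hx => isConj_one_right.1 hx
  mul_mem' {a b} ha hb := by
    refine (Set.Finite.mul ha hb).subset fun x hx => ?_
    obtain ⟨g, rfl⟩ := isConj_iff.1 hx
    exact ⟨g * a * g⁻¹, isConj_iff.2 ⟨g, rfl⟩, g * b * g⁻¹, isConj_iff.2 ⟨g, rfl⟩, conj_mul⟩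
  inv_mem' {a} ha := by
    refine (Set.Finite.inv ha).subset fun x hx => ?_
    obtain ⟨g, rfl⟩ := isConj_iff.1 hx
    exact isConj_iff.2 ⟨g, by group⟩

theorem mem_fcCenter {a : G} : a ∈ fcCenter G ↔ (conjugatesOf a).Finite :=
  Iff.rfl

instance fcCenter_normal : (fcCenter G).Normal where
  conj_mem a ha g := by
    rwa [mem_fcCenter, ← (isConj_iff.2 ⟨g, rfl⟩ : IsConj a _).conjugatesOf_eq]

theorem index_centralizer_singleton (a : G) :
    (centralizer {a}).index = (conjugatesOf a).ncard := by
  have orbit_eq : MulAction.orbit (ConjAct G) a = conjugatesOf a := by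
    ext x
    rw [ConjAct.mem_orbit_conjAct, isConj_comm]
    rfl
  rw [centralizer_eq_comap_stabilizer, ← orbit_eq, ← MulAction.index_stabilizer]
  exact index_comap_of_surjective _ ConjAct.toConjAct.surjective

theorem mem_fcCenter_iff_finiteIndex_centralizer {a : G} :
    a ∈ fcCenter G ↔ (centralizer {a}).FiniteIndex := by
  rw [mem_fcCenter, finiteIndex_iff, index_centralizer_singleton]
  exact ⟨fun h => Set.ncard_ne_zero_of_mem mem_conjugatesOf_self h, Set.finite_of_ncard_ne_zero⟩

end FCCenter

section GenericFilter

variable {G : Type*} [Group G]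

variable (G) in
/-- The filter of generic sets: those whose complement is covered by finitely many left cosets of
subgroups of infinite index. -/
def genericFilter : Filter G :=
  generate {S | ∃ (g : G) (H : Subgroup G), ¬H.FiniteIndex ∧ S = (g • (H : Set G))ᶜ}

theorem compl_leftCoset_mem_genericFilter {H : Subgroup G} (hH : ¬H.FiniteIndex) (g : G) :
    (g • (H : Set G))ᶜ ∈ genericFilter G :=
  mem_generate_of_mem ⟨g, H, hH, rfl⟩

instance genericFilter_neBot : (genericFilter G).NeBot := by
  refine generate_neBot_iff.2 fun T hT hfin => ?_
  choose! g H hH hS using fun S (hS : S ∈ T) => hT hS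
  by_contra hempty
  have cover : ⋃ S ∈ hfin.toFinset, g S • (H S : Set G) = Set.univ := by
    refine Set.eq_univ_of_forall fun x => ?_
    obtain ⟨S, hST, hxS⟩ : ∃ S ∈ T, x ∉ S := by
      by_contra! hx
      exact hempty ⟨x, hx⟩
    rw [hS S hST, Set.notMem_compl_iff] at hxS
    exact Set.mem_biUnion (hfin.mem_toFinset.2 hST) hxS
  obtain ⟨S, hST, hfi⟩ := exists_finiteIndex_of_leftCoset_cover cover
  exact hH S (hfin.mem_toFinset.1 hST) hfi

theorem tendsto_mul_left_genericFilter (d : G) :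
    Tendsto (d * ·) (genericFilter G) (genericFilter G) := by
  refine le_generate_iff.2 ?_
  rintro _ ⟨g, H, hH, rfl⟩
  have preimage_eq : (d * ·) ⁻¹' (g • (H : Set G))ᶜ = ((d⁻¹ * g) • (H : Set G))ᶜ := by
    rw [mul_smul, ← Set.preimage_smul]
    rfl
  exact mem_map.2 (preimage_eq ▸ compl_leftCoset_mem_genericFilter hH (d⁻¹ * g))

theorem eventually_not_semiconjBy {a : G} (ha : a ∉ fcCenter G) (b : G) :
    ∀ᶠ g in genericFilter G, ¬SemiconjBy g a b := by
  by_cases hex : ∃ g₀, SemiconjBy g₀ a b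
  · obtain ⟨g₀, hg₀⟩ := hex
    rw [mem_fcCenter_iff_finiteIndex_centralizer] at ha
    filter_upwards [compl_leftCoset_mem_genericFilter ha g₀] with g hg hgab
    refine hg (Set.mem_smul_set_iff_inv_smul_mem.2 (mem_centralizer_singleton_iff.2 ?_))
    exact (hg₀.inv_symm_left.mul_left hgab).eq
  · exact Eventually.of_forall (not_exists.1 hex)

theorem eq_top_of_eventually_mem_genericFilter {K : Subgroup G}
    (hK : ∀ᶠ g in genericFilter G, g ∈ K) : K = ⊤ := by
  refine (eq_top_iff' K).2 fun g => ?_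
  obtain ⟨h, hh, hgh⟩ := (hK.and ((tendsto_mul_left_genericFilter g).eventually hK)).exists
  exact (K.mul_mem_cancel_right hh).1 hgh

end GenericFilter

section Involution

variable {G : Type*} [Group G] {i : G}

theorem exists_commute_or_semiconjBy_of_sq_eq_one {s t : G} (hs : s ^ 2 = 1) (ht : t ^ 2 = 1)
    (hst : IsOfFinOrder (s * t)) :
    (∃ z, orderOf z = 2 ∧ Commute s z ∧ Commute t z) ∨
      ∃ y, SemiconjBy s y y⁻¹ ∧ SemiconjBy y s t := by
  have hs' : s⁻¹ = s := inv_eq_of_mul_eq_one_left (by rw [← sq, hs])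
  have ht' : t⁻¹ = t := inv_eq_of_mul_eq_one_left (by rw [← sq, ht])
  have inverts_s (n : ℕ) : SemiconjBy s ((s * t) ^ n) ((s * t) ^ n)⁻¹ := by
    have : SemiconjBy s (s * t) (s * t)⁻¹ := by simp [SemiconjBy, ← mul_assoc, ← sq, hs, ht']
    simpa only [inv_pow] using this.pow_right n
  obtain ⟨m, hm | hm⟩ := Nat.even_or_odd' (orderOf (s * t))
  · have hpos := hst.orderOf_pos
    have order_two : orderOf ((s * t) ^ m) = 2 := by
      rw [orderOf_pow_of_dvd (by omega) ⟨2, by omega⟩, hm, Nat.mul_div_cancel _ (by omega)]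
    have commute_s : Commute s ((s * t) ^ m) :=
      (inverts_s m).eq.trans (by rw [inv_eq_self_of_orderOf_eq_two order_two])
    have commute_t : Commute t ((s * t) ^ m) := by
      simpa [← mul_assoc, ← sq, hs] using commute_s.mul_left (Commute.self_pow (s * t) m)
    exact .inl ⟨_, order_two, commute_s, commute_t⟩
  · refine .inr ⟨(s * t) ^ m, inverts_s m, ?_⟩
    have pow_mul_pow : (s * t) ^ m * (s * t) ^ m = t * s := by
      have : (s * t) ^ m * (s * t) ^ m * (s * t) = 1 := by
        rw [← pow_add, ← pow_succ, ← two_mul, ← hm, pow_orderOf_eq_one]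
      rw [eq_inv_of_mul_eq_one_left this, mul_inv_rev, hs', ht']
    calc (s * t) ^ m * s
        = (s * t) ^ m * (s * (s * t) ^ m) * ((s * t) ^ m)⁻¹ := by group
      _ = s * ((s * t) ^ m)⁻¹ := by rw [(inverts_s m).eq]; group
      _ = t * (t * s) * ((s * t) ^ m)⁻¹ := by rw [← mul_assoc, ← sq, ht, one_mul]
      _ = t * (s * t) ^ m := by rw [← pow_mul_pow]; group

theorem exists_semiconjBy_or_semiconjBy_inv (hi : i ^ 2 = 1) {g : G}
    (hg : IsOfFinOrder ⁅i, g⁻¹⁆) :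
    (∃ z ∈ centralizer {i}, ∃ w ∈ centralizer {i}, orderOf z = 2 ∧ SemiconjBy g z w) ∨
      ∃ c ∈ centralizer {i}, SemiconjBy i (c⁻¹ * g) (c⁻¹ * g)⁻¹ := by
  simp only [mem_centralizer_singleton_iff]
  have hi' : i⁻¹ = i := inv_eq_of_mul_eq_one_left (by rw [← sq, hi])
  have ht : (g⁻¹ * i * g) ^ 2 = 1 := by
    simpa [hi] using conj_pow (i := 2) (a := g⁻¹) (b := i)
  have hit : IsOfFinOrder (i * (g⁻¹ * i * g)) := by
    simpa [commutatorElement_def, hi', mul_assoc] using hg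
  have conj_g : SemiconjBy g (g⁻¹ * i * g) i := by simp [SemiconjBy, mul_assoc]
  obtain ⟨z, hz, hiz, htz⟩ | ⟨y, hiy, hy⟩ := exists_commute_or_semiconjBy_of_sq_eq_one hi ht hit
  · refine .inl ⟨z, hiz.symm.eq, g * z * g⁻¹, ?_, hz, SemiconjBy.conj_mk g z⟩
    exact ((conj_g.mul_left htz.symm).mul_left conj_g.inv_symm_left).eq
  · refine .inr ⟨g * y, (conj_g.mul_left hy).eq, ?_⟩
    simpa using hiy.inv_right

theorem semiconjBy_mul_inv_mul {a c y : G} (hc : Commute i c) (ha : SemiconjBy i a a⁻¹)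
    (hy : SemiconjBy i y y⁻¹) (hcay : SemiconjBy i (c⁻¹ * (a * y)) (c⁻¹ * (a * y))⁻¹) :
    SemiconjBy y (a * c) (c⁻¹ * a) := by
  have conj_by_i : SemiconjBy i (c⁻¹ * (a * y)) (c⁻¹ * (a⁻¹ * y⁻¹)) :=
    hc.inv_right.semiconjBy.mul_right (ha.mul_right hy)
  have inv_eq : (c⁻¹ * (a * y))⁻¹ = c⁻¹ * (a⁻¹ * y⁻¹) :=
    mul_right_cancel (hcay.eq.symm.trans conj_by_i.eq)
  calc y * (a * c) = (c⁻¹ * (a⁻¹ * y⁻¹))⁻¹ := by group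
    _ = c⁻¹ * a * y := by rw [← inv_eq]; group

theorem eventually_exists_semiconjBy_inv (hi : i ^ 2 = 1) (htor : ∀ g : G, IsOfFinOrder ⁅i, g⁆)
    (hfin : (centralizer {i} : Set G).Finite)
    (hno : ∀ z ∈ centralizer {i}, orderOf z = 2 → z ∉ fcCenter G) :
    ∀ᶠ g in genericFilter G, ∃ c ∈ centralizer {i}, SemiconjBy i (c⁻¹ * g) (c⁻¹ * g)⁻¹ := by
  have no_transport : ∀ᶠ g in genericFilter G, ∀ z ∈ centralizer {i}, ∀ w ∈ centralizer {i},
      orderOf z = 2 → ¬SemiconjBy g z w := by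
    refine (eventually_all_finite hfin).2 fun z hz => (eventually_all_finite hfin).2 fun w _ => ?_
    exact eventually_imp_distrib_left.2 fun hz2 => eventually_not_semiconjBy (hno z hz hz2) w
  filter_upwards [no_transport] with g hg
  refine (exists_semiconjBy_or_semiconjBy_inv hi (htor g⁻¹)).resolve_left ?_
  rintro ⟨z, hz, w, hw, hz2, hzw⟩
  exact hg z hz w hw hz2 hzw

theorem exists_mul_mem_fcCenter_of_semiconjBy_inv (hfin : (centralizer {i} : Set G).Finite)
    (hgen : ∀ᶠ g in genericFilter G,
      ∃ c ∈ centralizer {i}, SemiconjBy i (c⁻¹ * g) (c⁻¹ * g)⁻¹)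
    {a : G} (ha : SemiconjBy i a a⁻¹) : ∃ c ∈ centralizer {i}, a * c ∈ fcCenter G := by
  by_contra! hno
  have no_conj : ∀ᶠ y in genericFilter G, ∀ c ∈ centralizer {i},
      ¬SemiconjBy y (a * c) (c⁻¹ * a) :=
    (eventually_all_finite hfin).2 fun c hc => eventually_not_semiconjBy (hno c hc) _
  have generic_y := ((tendsto_mul_left_genericFilter a).eventually hgen).and no_conj
  have generic_translates := (eventually_all_finite hfin).2 fun d _ =>
    (tendsto_mul_left_genericFilter d⁻¹).eventually generic_y
  obtain ⟨g, ⟨d, hd, hy⟩, hg⟩ := (hgen.and generic_translates).exists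
  obtain ⟨⟨c, hc, hcay⟩, hnot⟩ := hg d hd
  have hic : Commute i c := (mem_centralizer_singleton_iff.1 hc).symm
  exact hnot c hc (semiconjBy_mul_inv_mul hic ha hy hcay)

theorem centralizer_sup_fcCenter_eq_top (hfin : (centralizer {i} : Set G).Finite)
    (hgen : ∀ᶠ g in genericFilter G,
      ∃ c ∈ centralizer {i}, SemiconjBy i (c⁻¹ * g) (c⁻¹ * g)⁻¹) :
    centralizer {i} ⊔ fcCenter G = ⊤ := by
  refine eq_top_of_eventually_mem_genericFilter (hgen.mono ?_)
  rintro g ⟨c, hc, hy⟩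
  obtain ⟨d, hd, hyd⟩ := exists_mul_mem_fcCenter_of_semiconjBy_inv hfin hgen hy
  have hmem := mul_mem (mul_mem (mem_sup_left hc) (mem_sup_right hyd)) (mem_sup_left (inv_mem hd))
  rwa [mul_assoc, mul_inv_cancel_right, mul_inv_cancel_left] at hmem

end Involution

theorem torsion_group_involution_finite_centralizer_FC_general {G : Type*} [Group G] (i : G)
    (hi : i ^ 2 = 1) (htor : ∀ g : G, IsOfFinOrder ⁅i, g⁆)
    (hfin : (centralizer {i} : Set G).Finite) :
    (∃ j : G, j ≠ 1 ∧ j ^ 2 = 1 ∧ Commute j i ∧ {x : G | IsConj j x}.Finite) ∨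
    (∀ g : G, ∃ c a : G, c ∈ centralizer ({i} : Set G) ∧
      {x : G | IsConj a x}.Finite ∧ g = c * a) := by
  refine or_iff_not_imp_left.2 fun hno g => ?_
  have no_involution : ∀ z ∈ centralizer {i}, orderOf z = 2 → z ∉ fcCenter G := by
    intro z hz hz2 hfc
    obtain ⟨hsq, hne⟩ := orderOf_eq_prime_iff.1 hz2
    exact hno ⟨z, hne, hsq, mem_centralizer_singleton_iff.1 hz, hfc⟩
  have sup_eq_top := centralizer_sup_fcCenter_eq_top hfin
    (eventually_exists_semiconjBy_inv hi htor hfin no_involution)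
  obtain ⟨c, hc, a, ha, hca⟩ := mem_sup_of_normal_right.1 (sup_eq_top ▸ mem_top g)
  exact ⟨c, a, hc, ha, hca.symm⟩

/-- If a torsion group `G` contains an involution `i` with finite centralizer, then
either there is an involution commuting with `i` whose conjugacy class is finite, or
`G = C_G(i) · FC(G)`. -/
theorem torsion_group_involution_finite_centralizer_FC {G : Type*} [Group G]
    (hG : Monoid.IsTorsion G) (i : G) (hi1 : i ≠ 1) (hi2 : i ^ 2 = 1)
    (hfin : (Subgroup.centralizer {i} : Set G).Finite) :
    (∃ j : G, j ≠ 1 ∧ j ^ 2 = 1 ∧ Commute j i ∧ {x : G | IsConj j x}.Finite) ∨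
    (∀ g : G, ∃ c a : G, c ∈ Subgroup.centralizer ({i} : Set G) ∧
      {x : G | IsConj a x}.Finite ∧ g = c * a) :=
  torsion_group_involution_finite_centralizer_FC_general i hi2 (fun g => hG ⁅i, g⁆) hfin
end

section
/- There is no infinite simple torsion group containing an involution with finite centralizer; that is, if G is a torsion group that is simple and contains an involution i such that the centralizer C_G(i) is finite, then G is finite. -/
/-!
If involutions `i` and `j` have a product `t` of finite order, then they generate a finite dihedral
group: when the order of `t` is even, a nontrivial power of `t` commutes with both `i` and `j`, and
when it is odd, `j` is conjugated to `i` by a power of `t`, which is inverted by `i`. With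
`j = g⁻¹ i g` and `C = C(i)`, this shows that every `g` either conjugates some `z ≠ 1` in `C` into
`C`, or factors as `c x` with `c ∈ C` and `x` inverted by `i`.

Suppose that `C` is finite and fix `a ∉ C`. The same dichotomy for `a x` shows that the elements `x`
inverted by `i` either have `a x` conjugating some `z ≠ 1` in `C` into `C`, or have `b x` inverted
by `i` as well, where `b = d⁻¹ a ≠ 1` for some `d ∈ C`; in that case `x` conjugates `i b i⁻¹` to
`b⁻¹`. The elements conjugating a given element to another form a coset of a centralizer, so `G` is
a union of finitely many cosets of centralizers of nontrivial elements. By B. H. Neumann's lemma one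
of these centralizers has finite index, which a simple group allows only if it is finite.
-/

open scoped Pointwise

section

variable {G : Type*} [Group G]

/-- The set `S` is contained in a finite union of left cosets of centralizers of nontrivial
elements; a pair `(h, z)` encodes the coset `h • C(z)`. Such sets are the small ones in the
argument: unless some `z ≠ 1` has a centralizer of finite index, they are proper subsets of `G`. -/
def HasFiniteCentralizerCover (S : Set G) : Prop :=
  ∃ P : Set (G × G), P.Finite ∧ (∀ p ∈ P, p.2 ≠ 1) ∧
    S ⊆ ⋃ p ∈ P, p.1 • (Subgroup.centralizer {p.2} : Set G)

namespace HasFiniteCentralizerCover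

variable {S T : Set G}

theorem mono (hT : HasFiniteCentralizerCover T) (hST : S ⊆ T) : HasFiniteCentralizerCover S := by
  obtain ⟨P, hP, hP1, hTP⟩ := hT
  exact ⟨P, hP, hP1, hST.trans hTP⟩

theorem union (hS : HasFiniteCentralizerCover S) (hT : HasFiniteCentralizerCover T) :
    HasFiniteCentralizerCover (S ∪ T) := by
  obtain ⟨P, hP, hP1, hSP⟩ := hS
  obtain ⟨Q, hQ, hQ1, hTQ⟩ := hT
  refine ⟨P ∪ Q, hP.union hQ, fun p hp ↦ hp.elim (hP1 p) (hQ1 p), ?_⟩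
  rw [Set.biUnion_union]
  exact Set.union_subset_union hSP hTQ

theorem biUnion {ι : Type*} {s : Set ι} (hs : s.Finite) {S : ι → Set G}
    (hS : ∀ k ∈ s, HasFiniteCentralizerCover (S k)) :
    HasFiniteCentralizerCover (⋃ k ∈ s, S k) := by
  choose! P hP hP1 hSP using hS
  refine ⟨⋃ k ∈ s, P k, hs.biUnion hP, fun p hp ↦ ?_, Set.iUnion₂_subset fun k hk ↦ ?_⟩
  · obtain ⟨k, hk, hpk⟩ := Set.mem_iUnion₂.mp hp
    exact hP1 k hk p hpk
  · exact (hSP k hk).trans (Set.biUnion_subset_biUnion_left (Set.subset_biUnion_of_mem hk))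

theorem smul (hS : HasFiniteCentralizerCover S) (g : G) : HasFiniteCentralizerCover (g • S) := by
  obtain ⟨P, hP, hP1, hSP⟩ := hS
  refine ⟨(fun p ↦ (g * p.1, p.2)) '' P, hP.image _, Set.forall_mem_image.mpr hP1, ?_⟩
  simpa only [Set.biUnion_image, mul_smul, Set.smul_set_iUnion₂] using Set.smul_set_mono hSP

theorem setOf_semiconjBy {z : G} (hz : z ≠ 1) (w : G) :
    HasFiniteCentralizerCover {g | SemiconjBy g z w} := by
  obtain hempty | ⟨h, hh⟩ := Set.eq_empty_or_nonempty {g : G | SemiconjBy g z w}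
  · exact ⟨∅, Set.finite_empty, by simp, by simp [hempty]⟩
  · refine ⟨{(h, z)}, Set.finite_singleton _, by simpa using hz, fun g hg ↦ ?_⟩
    have hcomm : Commute (h⁻¹ * g) z := (SemiconjBy.inv_symm_left hh).mul_left hg
    simpa [mem_leftCoset_iff, Subgroup.mem_centralizer_singleton_iff] using hcomm.eq

theorem exists_finiteIndex_centralizer (h : HasFiniteCentralizerCover (Set.univ : Set G)) :
    ∃ z : G, z ≠ 1 ∧ (Subgroup.centralizer {z}).FiniteIndex := by
  obtain ⟨P, hP, hP1, hcover⟩ := h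
  obtain ⟨p, hp, hindex⟩ := Subgroup.exists_finiteIndex_of_leftCoset_cover (s := hP.toFinset)
    (g := Prod.fst) (H := fun p ↦ Subgroup.centralizer {p.2})
    (by simpa [Set.univ_subset_iff] using hcover)
  exact ⟨p.2, hP1 p (hP.mem_toFinset.mp hp), hindex⟩

end HasFiniteCentralizerCover

theorem semiconjBy_mul_inv_of_sq_eq_one {i j : G} (hi : i ^ 2 = 1) (hj : j ^ 2 = 1) :
    SemiconjBy i (i * j) (i * j)⁻¹ := by
  rw [sq] at hi hj
  rw [SemiconjBy, mul_inv_rev, inv_mul_cancel_right, ← mul_assoc, hi, one_mul]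
  exact eq_inv_of_mul_eq_one_left hj

theorem exists_commute_or_exists_semiconjBy {i j : G} (hi : i ^ 2 = 1) (hj : j ^ 2 = 1)
    (hij : IsOfFinOrder (i * j)) :
    (∃ z, z ≠ 1 ∧ Commute i z ∧ Commute j z) ∨
      ∃ u, SemiconjBy i u u⁻¹ ∧ SemiconjBy u j i := by
  set t := i * j with ht
  have hit : SemiconjBy i t t⁻¹ := semiconjBy_mul_inv_of_sq_eq_one hi hj
  have hj_eq : j = i * t := by rw [ht, ← mul_assoc, ← sq, hi, one_mul]
  obtain ⟨k, hk | hk⟩ := Nat.even_or_odd' (orderOf t)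
  · have hpos : 0 < orderOf t := hij.orderOf_pos
    have hz_inv : t⁻¹ ^ k = t ^ k := by
      rw [inv_pow, inv_eq_iff_mul_eq_one, ← pow_add, ← two_mul, ← hk, pow_orderOf_eq_one]
    have hiz : Commute i (t ^ k) := by
      have hpow := hit.pow_right k
      rwa [hz_inv] at hpow
    refine .inl ⟨t ^ k, pow_ne_one_of_lt_orderOf (by lia) (by lia), hiz, ?_⟩
    rw [hj_eq]
    exact hiz.mul_left (Commute.self_pow t k)
  · set u := t ^ (k + 1) with hu
    have huu : u * u = t := by
      rw [hu, ← pow_add, show k + 1 + (k + 1) = orderOf t + 1 by lia, pow_succ,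
        pow_orderOf_eq_one, one_mul]
    have hiu : SemiconjBy i u u⁻¹ := by
      simpa only [hu, inv_pow] using hit.pow_right (k + 1)
    refine .inr ⟨u, hiu, ?_⟩
    have hui : i * u⁻¹ = u * i := by simpa using hiu.inv_right.eq
    calc u * j = u * i * (u * u) := by rw [huu, mul_assoc, ← hj_eq]
      _ = i * u⁻¹ * (u * u) := by rw [hui]
      _ = i * u := by group

theorem exists_semiconjBy_or_eq_mul {i g : G} (hi : i ^ 2 = 1)
    (hord : IsOfFinOrder (i * (g⁻¹ * i * g))) :
    (∃ z w, z ≠ 1 ∧ Commute i z ∧ Commute i w ∧ SemiconjBy g z w) ∨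
      ∃ c x, Commute i c ∧ SemiconjBy i x x⁻¹ ∧ g = c * x := by
  have hj : (g⁻¹ * i * g) ^ 2 = 1 := by
    simpa [hi] using conj_pow (i := 2) (a := g⁻¹) (b := i)
  have hg : SemiconjBy g (g⁻¹ * i * g) i := by simp [SemiconjBy, mul_assoc]
  obtain ⟨z, hz, hiz, hjz⟩ | ⟨u, hiu, hu⟩ := exists_commute_or_exists_semiconjBy hi hj hord
  · refine .inl ⟨z, g * z * g⁻¹, hz, hiz, ?_, SemiconjBy.conj_mk g z⟩
    simpa [mul_assoc] using hjz.conj g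
  · have hc : Commute (g * u⁻¹) i := hg.mul_left hu.inv_symm_left
    exact .inr ⟨g * u⁻¹, u, hc.symm, hiu, by simp⟩

theorem semiconjBy_conj_inv_of_inverted {i b x : G} (hx : SemiconjBy i x x⁻¹)
    (hbx : SemiconjBy i (b * x) (b * x)⁻¹) : SemiconjBy x (i * b * i⁻¹) b⁻¹ := by
  have hxi : i * x⁻¹ = x * i := by simpa using hx.inv_right.eq
  calc x * (i * b * i⁻¹) = x * (i * (b * x)) * x⁻¹ * i⁻¹ := by group
    _ = x * ((b * x)⁻¹ * i) * x⁻¹ * i⁻¹ := by rw [hbx.eq]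
    _ = b⁻¹ * (i * x⁻¹) * i⁻¹ := by group
    _ = b⁻¹ * x := by rw [hxi, mul_assoc, mul_inv_cancel_right]

variable {i : G}

theorem hasFiniteCentralizerCover_univ_of_not_commute (hi : i ^ 2 = 1)
    (hord : ∀ j, IsConj i j → IsOfFinOrder (i * j))
    (hfin : (Subgroup.centralizer {i} : Set G).Finite) {a : G} (ha : ¬ Commute i a) :
    HasFiniteCentralizerCover (Set.univ : Set G) := by
  have hC : {c : G | Commute i c}.Finite := hfin.subset fun c hc ↦
    Subgroup.mem_centralizer_singleton_iff.mpr hc.eq.symm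
  set C : Set G := {c | Commute i c}
  set T : Set G := ⋃ p ∈ {p ∈ C ×ˢ C | p.1 ≠ 1}, {g | SemiconjBy g p.1 p.2}
  set I : Set G := {x | SemiconjBy i x x⁻¹}
  have hsplit (g : G) : g ∈ T ∪ ⋃ c ∈ C, c • I := by
    have hconj : IsConj i (g⁻¹ * i * g) := isConj_iff.mpr ⟨g⁻¹, by rw [inv_inv]⟩
    obtain ⟨z, w, hz, hiz, hiw, hg⟩ | ⟨c, x, hc, hx, rfl⟩ :=
      exists_semiconjBy_or_eq_mul hi (hord _ hconj)
    · exact .inl (Set.mem_biUnion (x := (z, w)) ⟨⟨hiz, hiw⟩, hz⟩ hg)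
    · exact .inr (Set.mem_biUnion hc (Set.smul_mem_smul_set hx))
  have hT : HasFiniteCentralizerCover T :=
    .biUnion ((hC.prod hC).subset (Set.sep_subset _ _)) fun p hp ↦ .setOf_semiconjBy hp.2 p.2
  have hI : HasFiniteCentralizerCover I := by
    have hcover : HasFiniteCentralizerCover
        (a⁻¹ • T ∪ ⋃ d ∈ C, {x | SemiconjBy x (i * (d⁻¹ * a) * i⁻¹) (d⁻¹ * a)⁻¹}) := by
      refine (hT.smul a⁻¹).union (.biUnion hC fun d hd ↦ .setOf_semiconjBy ?_ _)
      rw [Ne, conj_eq_one_iff, inv_mul_eq_one]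
      rintro rfl
      exact ha hd
    refine hcover.mono fun x hx ↦ ?_
    obtain hax | hax := hsplit (a * x)
    · exact .inl (Set.mem_smul_set_iff_inv_smul_mem.mpr (by simpa using hax))
    · obtain ⟨d, hd, hdx⟩ := Set.mem_iUnion₂.mp hax
      rw [Set.mem_smul_set_iff_inv_smul_mem, smul_eq_mul, ← mul_assoc] at hdx
      exact .inr (Set.mem_biUnion hd (semiconjBy_conj_inv_of_inverted hx hdx))
  exact (hT.union (.biUnion hC fun c _ ↦ hI.smul c)).mono fun g _ ↦ hsplit g

theorem exists_finiteIndex_centralizer_of_finite_centralizer (hi1 : i ≠ 1) (hi2 : i ^ 2 = 1)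
    (hord : ∀ j, IsConj i j → IsOfFinOrder (i * j))
    (hfin : (Subgroup.centralizer {i} : Set G).Finite) :
    ∃ z : G, z ≠ 1 ∧ (Subgroup.centralizer {z}).FiniteIndex := by
  by_cases hcentral : ∀ a, Commute i a
  · have htop : Subgroup.centralizer {i} = ⊤ := by
      simpa [Subgroup.mem_center_iff] using fun a ↦ (hcentral a).eq.symm
    exact ⟨i, hi1, htop ▸ inferInstance⟩
  · push Not at hcentral
    obtain ⟨a, ha⟩ := hcentral
    have hcover := hasFiniteCentralizerCover_univ_of_not_commute hi2 hord hfin ha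
    exact hcover.exists_finiteIndex_centralizer

theorem finite_of_finiteIndex_centralizer [IsSimpleGroup G] {z : G} (hz : z ≠ 1)
    (hindex : (Subgroup.centralizer {z}).FiniteIndex) : Finite G := by
  obtain hcore | hcore :=
    (Subgroup.normalCore_normal (Subgroup.centralizer {z})).eq_bot_or_eq_top
  · have hbot : (⊥ : Subgroup G).FiniteIndex := hcore ▸ inferInstance
    exact Nat.finite_of_card_ne_zero (Subgroup.index_bot (G := G) ▸ hbot.index_ne_zero)
  · have hz_center : z ∈ Subgroup.center G :=
      Set.singleton_subset_iff.mp <| Subgroup.centralizer_eq_top_iff_subset.mp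
        (top_le_iff.mp (hcore ▸ Subgroup.normalCore_le (Subgroup.centralizer {z})))
    have hcenter : Subgroup.center G = ⊤ :=
      (inferInstance : (Subgroup.center G).Normal).eq_bot_or_eq_top.resolve_left
        fun h ↦ hz (Subgroup.mem_bot.mp (h ▸ hz_center))
    let _ : CommGroup G := Group.commGroupOfCenterEqTop hcenter
    exact IsSimpleGroup.finite

theorem simple_torsion_group_involution_finite_centralizer_finite_general [IsSimpleGroup G]
    (hi1 : i ≠ 1) (hi2 : i ^ 2 = 1) (hord : ∀ j, IsConj i j → IsOfFinOrder (i * j))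
    (hfin : (Subgroup.centralizer {i} : Set G).Finite) : Finite G := by
  obtain ⟨z, hz, hindex⟩ :=
    exists_finiteIndex_centralizer_of_finite_centralizer hi1 hi2 hord hfin
  exact finite_of_finiteIndex_centralizer hz hindex

end

/-- There is no infinite simple torsion group containing an involution with finite
centralizer. -/
theorem simple_torsion_group_involution_finite_centralizer_finite {G : Type*} [Group G]
    (hG : Monoid.IsTorsion G) [IsSimpleGroup G] (i : G) (hi1 : i ≠ 1) (hi2 : i ^ 2 = 1)
    (hfin : (Subgroup.centralizer {i} : Set G).Finite) :
    Finite G :=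
  simple_torsion_group_involution_finite_centralizer_finite_general hi1 hi2
    (fun j _ ↦ hG (i * j)) hfin
end

section
/- There exists a function f : ℕ → ℕ such that for every natural number n the following holds: if G is a finite group admitting an automorphism α with α ∘ α = id such that Fix(α) has at most n elements, then there is a characteristic subgroup H of G such that the quotient G/H has order at most f(n) and the derived subgroup H' has order at most f(n). -/
/-!
Let `α` be the involution. The elements `g / α g` are inverted by `α`, and `g ↦ g / α g` is constant
exactly on the left cosets of the fixed subgroup, so at least `|G| / n` elements are inverted.
If `α` inverts `x` and `y`, then `α` sends `z = x⁻¹ y` to `x z⁻¹ x⁻¹`; hence, for a given `z`, such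
`x` lie in one coset of the centralizer of `z`, and at least `|G|² / n²` pairs of elements commute.
From there on only this lower bound on the commuting probability matters (P. M. Neumann): a
positive proportion of the elements have boundedly many conjugates, so the characteristic subgroup
that they generate has bounded index, and since every element of it is a product of boundedly many
of these generators, its conjugacy classes are bounded. Its derived subgroup is therefore bounded
by B. H. Neumann's theorem on BFC groups.
-/

section

open Subgroup
open scoped Pointwise commutatorElement

theorem encard_mul_le_encard_mul_encard {M : Type*} [Mul M] (s t : Set M) :
    (s * t).encard ≤ s.encard * t.encard := by
  rw [← Set.image_mul_prod, ← Set.encard_prod]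
  exact Set.encard_image_le _ _

section Conjugates

variable {G H : Type*} [Group G] [Group H]

theorem conj_mem_conjugatesOf (a g : G) : g * a * g⁻¹ ∈ conjugatesOf a :=
  isConj_iff.2 ⟨g, rfl⟩

theorem conjugatesOf_mul_subset (a b : G) :
    conjugatesOf (a * b) ⊆ conjugatesOf a * conjugatesOf b := by
  intro w hw
  obtain ⟨g, rfl⟩ := isConj_iff.1 hw
  rw [← conj_mul]
  exact Set.mul_mem_mul (conj_mem_conjugatesOf a g) (conj_mem_conjugatesOf b g)

theorem conjugatesOf_inv_subset (a : G) : conjugatesOf a⁻¹ ⊆ (conjugatesOf a)⁻¹ := by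
  intro w hw
  obtain ⟨g, rfl⟩ := isConj_iff.1 hw
  rw [← conj_inv, Set.inv_mem_inv]
  exact conj_mem_conjugatesOf a g

theorem encard_conjugatesOf_le_map (f : G →* H) (hf : Function.Injective f) (a : G) :
    (conjugatesOf a).encard ≤ (conjugatesOf (f a)).encard :=
  Set.encard_le_encard_of_injOn (fun _ hw => f.map_isConj hw) hf.injOn

theorem ncard_conjugatesOf_eq_index_centralizer (a : G) :
    (conjugatesOf a).ncard = (centralizer {a}).index := by
  have comap_stabilizer : (MulAction.stabilizer (ConjAct G) a).comap
      (ConjAct.toConjAct (G := G)).toMonoidHom = centralizer {a} := by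
    ext x
    simp [mem_centralizer_singleton_iff, ConjAct.smul_def, mul_inv_eq_iff_eq_mul]
  rw [← comap_stabilizer, index_comap_of_surjective _ (ConjAct.toConjAct (G := G)).surjective,
    MulAction.index_stabilizer, ConjAct.orbit_eq_carrier_conjClasses]
  rfl

variable (G) in
/-- The elements of `G` having at most `m` conjugates, which generate the subgroup in
P. M. Neumann's theorem. Measuring classes by `encard` makes the bound include their finiteness. -/
def boundedClassSet (m : ℕ) : Set G := {g | (conjugatesOf g).encard ≤ m}

theorem one_mem_boundedClassSet {m : ℕ} (hm : 1 ≤ m) : (1 : G) ∈ boundedClassSet G m := by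
  have : conjugatesOf (1 : G) = {1} := by ext; simp [conjugatesOf]
  simpa [boundedClassSet, this] using hm

theorem boundedClassSet_mul_subset (m k : ℕ) :
    boundedClassSet G m * boundedClassSet G k ⊆ boundedClassSet G (m * k) := by
  rintro _ ⟨a, ha, b, hb, rfl⟩
  calc (conjugatesOf (a * b)).encard
      ≤ (conjugatesOf a * conjugatesOf b).encard := Set.encard_mono (conjugatesOf_mul_subset a b)
    _ ≤ (conjugatesOf a).encard * (conjugatesOf b).encard := encard_mul_le_encard_mul_encard _ _
    _ ≤ (m * k : ℕ) := by rw [Nat.cast_mul]; exact mul_le_mul' ha hb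

theorem boundedClassSet_pow_subset (m k : ℕ) :
    boundedClassSet G m ^ k ⊆ boundedClassSet G (m ^ k) := by
  induction k with
  | zero => simpa using one_mem_boundedClassSet le_rfl
  | succ k ih =>
    rw [pow_succ, pow_succ]
    exact (Set.mul_subset_mul_right ih).trans (boundedClassSet_mul_subset _ _)

theorem inv_mem_boundedClassSet {m : ℕ} {g : G} (hg : g ∈ boundedClassSet G m) :
    g⁻¹ ∈ boundedClassSet G m := by
  refine (Set.encard_mono (conjugatesOf_inv_subset g)).trans ?_
  rwa [← Set.image_inv_eq_inv, inv_injective.encard_image]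

theorem map_mem_boundedClassSet {m : ℕ} (φ : G ≃* H) {g : G} (hg : g ∈ boundedClassSet G m) :
    φ g ∈ boundedClassSet H m := by
  refine (encard_conjugatesOf_le_map φ.symm.toMonoidHom φ.symm.injective (φ g)).trans ?_
  simpa [boundedClassSet] using hg

theorem characteristic_closure_boundedClassSet (m : ℕ) :
    (closure (boundedClassSet G m)).Characteristic := by
  rw [characteristic_iff_map_le]
  intro φ
  rw [MonoidHom.map_closure]
  refine closure_mono ?_
  rintro _ ⟨g, hg, rfl⟩
  exact map_mem_boundedClassSet φ hg

end Conjugates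

section BFC

variable {G : Type*} [Group G]

theorem conjugatesOf_mul_eq_image {a u : G} (hfin : (conjugatesOf a).Finite)
    (hmax : (conjugatesOf (a * u)).encard ≤ (conjugatesOf a).encard)
    (hu : ∀ w ∈ conjugatesOf a, ∃ b, b * a * b⁻¹ = w ∧ Commute b u) :
    conjugatesOf (a * u) = (· * u) '' conjugatesOf a := by
  refine ((hfin.image _).eq_of_subset_of_encard_le ?_ ?_).symm
  · rintro _ ⟨w, hw, rfl⟩
    obtain ⟨b, rfl, hbu⟩ := hu w hw
    refine isConj_iff.2 ⟨b, ?_⟩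
    simp only [mul_assoc, hbu.inv_left.eq]
  · rwa [(mul_left_injective u).encard_image]

theorem commutatorElement_mem_inv_conjugatesOf_mul {a u : G}
    (h : conjugatesOf (a * u) = (· * u) '' conjugatesOf a) (g : G) :
    ⁅g, u⁆ ∈ (conjugatesOf a)⁻¹ * conjugatesOf a := by
  obtain ⟨w, hw, hwu⟩ : g * (a * u) * g⁻¹ ∈ (· * u) '' conjugatesOf a :=
    h ▸ conj_mem_conjugatesOf (a * u) g
  refine ⟨(g * a * g⁻¹)⁻¹, Set.inv_mem_inv.2 (conj_mem_conjugatesOf a g), w, hw, ?_⟩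
  rw [eq_mul_inv_of_mul_eq hwu, commutatorElement_def]
  group

theorem exists_index_le_forall_commutatorElement_mem {m : ℕ}
    (hm : ∀ g : G, (conjugatesOf g).encard ≤ m) :
    ∃ (a : G) (U : Subgroup G), U.index ≠ 0 ∧ U.index ≤ m ^ m ∧
      ∀ u ∈ U, ∀ g : G, ⁅g, u⁆ ∈ (conjugatesOf a)⁻¹ * conjugatesOf a := by
  have finite_conj (g : G) : (conjugatesOf g).Finite := Set.finite_of_encard_le_coe (hm g)
  have ncard_le (g : G) : (conjugatesOf g).ncard ≤ m := by
    exact_mod_cast (finite_conj g).cast_ncard_eq ▸ hm g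
  have one_le_m : 1 ≤ m :=
    ((Set.ncard_pos (finite_conj 1)).2 ⟨1, mem_conjugatesOf_self⟩).trans_le (ncard_le 1)
  obtain ⟨a, ha⟩ : ∃ a : G, (conjugatesOf a).encard = ⨆ g : G, (conjugatesOf g).encard :=
    ENat.exists_eq_iSup_of_lt_top ((iSup_le hm).trans_lt (ENat.natCast_lt_top m))
  choose b hb using fun w : conjugatesOf a => isConj_iff.1 w.2
  have := (finite_conj a).fintype
  refine ⟨a, ⨅ w, centralizer {b w}, ?_, ?_, fun u hu g => ?_⟩
  · refine index_iInf_ne_zero fun w => ?_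
    rw [← ncard_conjugatesOf_eq_index_centralizer]
    exact ((Set.ncard_pos (finite_conj _)).2 ⟨_, mem_conjugatesOf_self⟩).ne'
  · calc (⨅ w, centralizer {b w}).index
        ≤ ∏ w, (centralizer {b w}).index := index_iInf_le _
      _ ≤ m ^ Fintype.card (conjugatesOf a) :=
          Finset.prod_le_pow_card _ _ m fun w _ =>
            ncard_conjugatesOf_eq_index_centralizer (b w) ▸ ncard_le (b w)
      _ ≤ m ^ m := Nat.pow_le_pow_right one_le_m
          (by simpa [← Nat.card_eq_fintype_card, Nat.card_coe_set_eq] using ncard_le a)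
  · -- The class of `a` is as large as possible, so its translate by `u` fills the class of `a * u`.
    have encard_le : (conjugatesOf (a * u)).encard ≤ (conjugatesOf a).encard :=
      ha ▸ le_iSup (fun g => (conjugatesOf g).encard) (a * u)
    refine commutatorElement_mem_inv_conjugatesOf_mul
      (conjugatesOf_mul_eq_image (finite_conj a) encard_le fun w hw => ?_) g
    exact ⟨b ⟨w, hw⟩, hb ⟨w, hw⟩,
      (mem_centralizer_singleton_iff.1 (mem_iInf.1 hu ⟨w, hw⟩)).symm⟩

theorem encard_commutatorSet_le {m : ℕ} (hm : ∀ g : G, (conjugatesOf g).encard ≤ m) :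
    (commutatorSet G).encard ≤ (m ^ (m + 3) : ℕ) := by
  obtain ⟨a, U, hU₀, hU, hcomm⟩ := exists_index_le_forall_commutatorElement_mem hm
  let piece (q : G ⧸ U) : Set G :=
    conjugatesOf q.out * ((conjugatesOf a)⁻¹ * conjugatesOf a) * {q.out⁻¹}
  have commutatorSet_subset : commutatorSet G ⊆ ⋃ q, piece q := by
    rintro _ ⟨g, x, rfl⟩
    obtain ⟨u, hu⟩ := QuotientGroup.mk_out_eq_mul U x
    refine Set.mem_iUnion.2 ⟨x, _, Set.mul_mem_mul (conj_mem_conjugatesOf _ g)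
      (hcomm _ (U.inv_mem u.2) g), _, rfl, ?_⟩
    simp only [hu, commutatorElement_def]
    group
  have encard_piece_le (q : G ⧸ U) : (piece q).encard ≤ (m ^ 3 : ℕ) := by
    refine (encard_mul_le_encard_mul_encard _ _).trans ?_
    rw [Set.encard_singleton, mul_one]
    refine (encard_mul_le_encard_mul_encard _ _).trans ?_
    rw [pow_succ', sq, Nat.cast_mul, Nat.cast_mul]
    refine mul_le_mul' (hm _) ((encard_mul_le_encard_mul_encard _ _).trans ?_)
    rw [← Set.image_inv_eq_inv, inv_injective.encard_image]
    exact mul_le_mul' (hm a) (hm a)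
  have : Finite (G ⧸ U) := Nat.finite_of_card_ne_zero hU₀
  have := Fintype.ofFinite (G ⧸ U)
  calc (commutatorSet G).encard
      ≤ (⋃ q, piece q).encard := Set.encard_mono commutatorSet_subset
    _ ≤ ∑ q, (piece q).encard := Set.encard_iUnion_le_of_fintype piece
    _ ≤ ∑ _q : G ⧸ U, ((m ^ 3 : ℕ) : ℕ∞) := Finset.sum_le_sum fun q _ => encard_piece_le q
    _ = (U.index * m ^ 3 : ℕ) := by
      rw [Finset.sum_const, Finset.card_univ, ← Nat.card_eq_fintype_card, nsmul_eq_mul,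
        Nat.cast_mul]; rfl
    _ ≤ (m ^ (m + 3) : ℕ) := by rw [pow_add]; gcongr

theorem cardCommutatorBound_le_of_le {a b : ℕ} (ha : 1 ≤ a) (hab : a ≤ b) :
    cardCommutatorBound a ≤ cardCommutatorBound b := by
  have hb : 1 ≤ b := ha.trans hab
  have : 1 ≤ b ^ (2 * b) := Nat.one_le_pow _ _ hb
  unfold cardCommutatorBound
  gcongr

theorem card_commutator_le_cardCommutatorBound {m : ℕ}
    (hm : ∀ g : G, (conjugatesOf g).encard ≤ m) :
    Nat.card (commutator G) ≤ cardCommutatorBound (m ^ (m + 3)) := by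
  have hle := encard_commutatorSet_le hm
  have hfin : (commutatorSet G).Finite := Set.finite_of_encard_le_coe hle
  have : Finite (commutatorSet G) := hfin
  refine (card_commutator_le_of_finite_commutatorSet G).trans
    (cardCommutatorBound_le_of_le Finite.card_pos ?_)
  rw [Nat.card_coe_set_eq]
  exact_mod_cast hfin.cast_ncard_eq ▸ hle

theorem card_commutator_le_of_subset_boundedClassSet {H : Subgroup G} {m : ℕ}
    (hH : (H : Set G) ⊆ boundedClassSet G m) :
    Nat.card ↥⁅H, H⁆ ≤ cardCommutatorBound (m ^ (m + 3)) := by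
  rw [← map_subtype_commutator, card_map_of_injective H.subtype_injective]
  exact card_commutator_le_cardCommutatorBound fun h =>
    (encard_conjugatesOf_le_map H.subtype H.subtype_injective h).trans (hH h.2)

end BFC

section Closure

variable {G : Type*} [Group G] {X : Set G}

theorem closure_subset_pow_of_pow_succ_subset (h_one : 1 ∈ X) (h_inv : ∀ x ∈ X, x⁻¹ ∈ X) {m : ℕ}
    (h : X ^ (m + 1) ⊆ X ^ m) : (closure X : Set G) ⊆ X ^ m := by
  intro g hg
  induction hg using closure_induction_right with
  | one => exact Set.one_mem_pow h_one
  | mul_right x _ y hy ih => exact h (pow_succ X m ▸ Set.mul_mem_mul ih hy)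
  | mul_inv_cancel x _ y hy ih =>
    exact h (pow_succ X m ▸ Set.mul_mem_mul ih (h_inv y hy))

theorem ncard_pow_add_ncard_le_ncard_pow_add_three [Finite G] (h_one : 1 ∈ X)
    (h_inv : ∀ x ∈ X, x⁻¹ ∈ X) {m : ℕ} (h : ¬ X ^ (m + 2) ⊆ X ^ (m + 1)) :
    (X ^ m).ncard + X.ncard ≤ (X ^ (m + 3)).ncard := by
  obtain ⟨g, hg, hg'⟩ := Set.not_subset.1 h
  have disjoint_translate : Disjoint (X ^ m) (g • X) := by
    refine Set.disjoint_left.2 fun y hy => ?_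
    rintro ⟨x, hx, rfl⟩
    refine hg' ?_
    rw [pow_succ, ← mul_inv_cancel_right g x]
    exact Set.mul_mem_mul hy (h_inv x hx)
  have translate_subset : g • X ⊆ X ^ (m + 3) := by
    rintro _ ⟨x, hx, rfl⟩
    exact pow_succ X (m + 2) ▸ Set.mul_mem_mul hg hx
  calc (X ^ m).ncard + X.ncard = (X ^ m ∪ g • X).ncard := by
        rw [Set.ncard_union_eq disjoint_translate, Set.ncard_smul_set]
    _ ≤ (X ^ (m + 3)).ncard :=
        Set.ncard_le_ncard (Set.union_subset (Set.pow_subset_pow_right h_one (by omega))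
          translate_subset)

theorem closure_subset_pow_of_card_le [Finite G] (h_one : 1 ∈ X) (h_inv : ∀ x ∈ X, x⁻¹ ∈ X) {k : ℕ}
    (hk : Nat.card G ≤ k * X.ncard) : (closure X : Set G) ⊆ X ^ (3 * k) := by
  by_contra h_closure
  have not_stable {m : ℕ} (hm : m ≤ 3 * k) : ¬ X ^ (m + 1) ⊆ X ^ m := fun h =>
    h_closure ((closure_subset_pow_of_pow_succ_subset h_one h_inv h).trans
      (Set.pow_subset_pow_right h_one hm))
  have growth : ∀ i ≤ k, (i + 1) * X.ncard ≤ (X ^ (3 * i + 2)).ncard := by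
    intro i
    induction i with
    | zero =>
      intro _
      simpa using Set.ncard_le_ncard (Set.subset_pow h_one two_ne_zero)
    | succ i ih =>
      intro hi
      calc (i + 1 + 1) * X.ncard = (i + 1) * X.ncard + X.ncard := by ring
        _ ≤ (X ^ (3 * i + 2)).ncard + X.ncard := by gcongr; exact ih (by omega)
        _ ≤ (X ^ (3 * (i + 1) + 2)).ncard :=
            ncard_pow_add_ncard_le_ncard_pow_add_three h_one h_inv
              (not_stable (m := 3 * i + 3) (by omega))
  have h_pos : 0 < X.ncard := (Set.ncard_pos).2 ⟨1, h_one⟩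
  have := (growth k le_rfl).trans ((Set.ncard_le_card _).trans hk)
  rw [add_mul] at this
  omega

end Closure

section CommutingProbability

variable {G : Type*} [Group G] [Finite G]

theorem card_le_mul_ncard_boundedClassSet {K : ℕ} (hK : 1 ≤ K * commProb G) :
    Nat.card G ≤ 2 * K * (boundedClassSet G (2 * K)).ncard := by
  classical
  have := Fintype.ofFinite G
  have card_le : Nat.card G ≤ K * Nat.card (ConjClasses G) := by
    rw [commProb_def', ← mul_div_assoc, one_le_div (by exact_mod_cast Nat.card_pos)] at hK
    exact_mod_cast hK
  let small : Finset (ConjClasses G) := {c | c.carrier.ncard ≤ 2 * K}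
  have card_small_le : small.card ≤ (boundedClassSet G (2 * K)).ncard := by
    rw [← Set.ncard_coe_finset]
    refine (Set.ncard_le_ncard ?_).trans (Set.ncard_image_le (f := ConjClasses.mk))
    intro c hc
    obtain ⟨g, rfl⟩ := ConjClasses.exists_rep c
    refine ⟨g, ?_, rfl⟩
    have : (conjugatesOf g).ncard ≤ 2 * K := (Finset.mem_filter.1 hc).2
    change (conjugatesOf g).encard ≤ (2 * K : ℕ)
    rw [← (Set.toFinite _).cast_ncard_eq]
    exact_mod_cast this
  have markov : 2 * K * Nat.card (ConjClasses G) ≤ Nat.card G + 2 * K * small.card := by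
    calc 2 * K * Nat.card (ConjClasses G) = ∑ _c : ConjClasses G, 2 * K := by
          simp [mul_comm]
      _ ≤ ∑ c : ConjClasses G, (c.carrier.ncard + if c ∈ small then 2 * K else 0) := by
          gcongr with c
          simp only [small, Finset.mem_filter_univ]
          split_ifs <;> omega
      _ = Nat.card G + 2 * K * small.card := by
          rw [Finset.sum_add_distrib, ← Group.sum_card_conj_classes_eq_card,
            finsum_eq_sum_of_fintype, Finset.sum_ite_mem, Finset.univ_inter, Finset.sum_const,
            smul_eq_mul, mul_comm small.card]
  calc Nat.card G ≤ 2 * K * small.card := by linarith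
    _ ≤ 2 * K * (boundedClassSet G (2 * K)).ncard := by gcongr

theorem index_le_of_card_le_mul_ncard {H : Subgroup G} {X : Set G} {k : ℕ}
    (hX : X ⊆ H) (hk : Nat.card G ≤ k * X.ncard) : H.index ≤ k := by
  refine Nat.le_of_mul_le_mul_left (c := Nat.card H) ?_ Nat.card_pos
  calc Nat.card H * H.index = Nat.card G := H.card_mul_index
    _ ≤ k * X.ncard := hk
    _ ≤ k * Nat.card H := by
      gcongr
      exact Set.ncard_le_ncard hX
    _ = Nat.card H * k := mul_comm _ _

/-- The bound for the order of the derived subgroup in P. M. Neumann's theorem on finite groups of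
commuting probability at least `1 / K`; there `m` bounds the conjugacy classes of the elements of
the subgroup, and `m ^ (m + 3)` its number of commutators. -/
def neumannBound (K : ℕ) : ℕ :=
  let m := (2 * K) ^ (3 * (2 * K))
  cardCommutatorBound (m ^ (m + 3))

theorem exists_characteristic_of_one_le_mul_commProb {K : ℕ} (hK : 1 ≤ K * commProb G) :
    ∃ H : Subgroup G, H.Characteristic ∧ H.index ≤ 2 * K ∧
      Nat.card ↥⁅H, H⁆ ≤ neumannBound K := by
  have K_ne_zero : K ≠ 0 := by
    rintro rfl
    norm_num at hK
  have h_card := card_le_mul_ncard_boundedClassSet hK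
  refine ⟨closure (boundedClassSet G (2 * K)), characteristic_closure_boundedClassSet _,
    index_le_of_card_le_mul_ncard subset_closure h_card,
    card_commutator_le_of_subset_boundedClassSet ?_⟩
  exact (closure_subset_pow_of_card_le (one_mem_boundedClassSet (by omega))
    (fun _ => inv_mem_boundedClassSet) h_card).trans (boundedClassSet_pow_subset _ _)

end CommutingProbability

section Involution

variable {G : Type*} [Group G] [Finite G]

theorem card_le_card_fixed_mul_card_inverted {α : G →* G} (hα : ∀ g, α (α g) = g) :
    Nat.card G ≤ Nat.card {g // α g = g} * Nat.card {g // α g = g⁻¹} := by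
  let F : Subgroup G := α.eqLocus (MonoidHom.id G)
  let f (q : G ⧸ F) : {g // α g = g⁻¹} := ⟨q.out / α q.out, by simp [hα]⟩
  have f_injective : Function.Injective f := by
    intro q r hqr
    have h_div : q.out / α q.out = r.out / α r.out := congrArg Subtype.val hqr
    rw [← q.out_eq', ← r.out_eq', QuotientGroup.eq]
    change α (q.out⁻¹ * r.out) = q.out⁻¹ * r.out
    calc α (q.out⁻¹ * r.out) = q.out⁻¹ * (q.out / α q.out) * α r.out := by
          simp [div_eq_mul_inv]
      _ = q.out⁻¹ * r.out := by rw [h_div, mul_assoc, div_mul_cancel]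
  calc Nat.card G = Nat.card F * Nat.card (G ⧸ F) := by
        rw [mul_comm, card_eq_card_quotient_mul_card_subgroup F]
    _ ≤ Nat.card F * Nat.card {g // α g = g⁻¹} :=
        Nat.mul_le_mul_left _ (Nat.card_le_card_of_injective f f_injective)

theorem card_inverted_sq_le_card_commute (α : G →* G) :
    Nat.card {g // α g = g⁻¹} ^ 2 ≤ Nat.card {p : G × G // Commute p.1 p.2} := by
  have exists_base (z : G) : ∃ b, ∀ x, x * z⁻¹ * x⁻¹ = α z → Commute z (b⁻¹ * x) := by
    by_cases h : ∃ b, b * z⁻¹ * b⁻¹ = α z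
    · obtain ⟨b, hb⟩ := h
      refine ⟨b, fun x hx => Commute.inv_left_iff.1 ?_⟩
      rw [← hb, mul_inv_eq_iff_eq_mul] at hx
      rw [commute_iff_eq, mul_assoc, hx]
      group
    · exact ⟨1, fun x hx => (h ⟨x, hx⟩).elim⟩
  choose b hb using exists_base
  have conj_inv_div {x y : G} (hx : α x = x⁻¹) (hy : α y = y⁻¹) :
      x * (x⁻¹ * y)⁻¹ * x⁻¹ = α (x⁻¹ * y) := by
    rw [map_mul, map_inv, hx, hy]
    group
  let f (p : {g // α g = g⁻¹} × {g // α g = g⁻¹}) : {p : G × G // Commute p.1 p.2} :=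
    ⟨(p.1.1⁻¹ * p.2.1, (b (p.1.1⁻¹ * p.2.1))⁻¹ * p.1.1), hb _ _ (conj_inv_div p.1.2 p.2.2)⟩
  have f_injective : Function.Injective f := by
    rintro ⟨x, y⟩ ⟨x', y'⟩ h
    obtain ⟨hz, hx⟩ : x.1⁻¹ * y = x'.1⁻¹ * y' ∧
        (b (x.1⁻¹ * y))⁻¹ * x = (b (x'.1⁻¹ * y'))⁻¹ * x' :=
      Prod.mk.inj (congrArg Subtype.val h)
    rw [hz, mul_right_inj, Subtype.coe_inj] at hx
    subst hx
    rw [mul_right_inj, Subtype.coe_inj] at hz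
    rw [hz]
  rw [sq, ← Nat.card_prod]
  exact Nat.card_le_card_of_injective f f_injective

theorem one_le_card_fixed_sq_mul_commProb {α : G →* G} (hα : ∀ g, α (α g) = g) :
    1 ≤ (Nat.card {g // α g = g} ^ 2 : ℕ) * commProb G := by
  rw [commProb_def, ← mul_div_assoc, one_le_div (by exact_mod_cast pow_pos Nat.card_pos 2)]
  norm_cast
  calc Nat.card G ^ 2 ≤ (Nat.card {g // α g = g} * Nat.card {g // α g = g⁻¹}) ^ 2 :=
        Nat.pow_le_pow_left (card_le_card_fixed_mul_card_inverted hα) 2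
    _ = Nat.card {g // α g = g} ^ 2 * Nat.card {g // α g = g⁻¹} ^ 2 := mul_pow _ _ 2
    _ ≤ Nat.card {g // α g = g} ^ 2 * Nat.card {p : G × G // Commute p.1 p.2} :=
        Nat.mul_le_mul_left _ (card_inverted_sq_le_card_commute α)

end Involution

end

theorem finite_group_involutory_automorphism_finiteByAbelianByFinite_general
    {G : Type*} [Group G] [Finite G] {α : G →* G} (hα : ∀ g, α (α g) = g) {n : ℕ}
    (hn : Nat.card {g : G // α g = g} ≤ n) :
    ∃ H : Subgroup G, H.Characteristic ∧ H.index ≤ 2 * n ^ 2 ∧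
      Nat.card ↥⁅H, H⁆ ≤ neumannBound (n ^ 2) := by
  refine exists_characteristic_of_one_le_mul_commProb
    ((one_le_card_fixed_sq_mul_commProb hα).trans ?_)
  have := (commProb_pos G).le
  gcongr

/-- There is a function `f : ℕ → ℕ` such that any finite group `G` with an involutory
automorphism fixing at most `n` elements has a characteristic subgroup `H` with
`[G : H] ≤ f n` and `|H'| ≤ f n`. -/
theorem finite_group_involutory_automorphism_finiteByAbelianByFinite :
    ∃ f : ℕ → ℕ, ∀ n : ℕ, ∀ (G : Type) [Group G] [Finite G],
      ∀ α : G ≃* G, (∀ g, α (α g) = g) →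
      Nat.card {g : G // α g = g} ≤ n →
      ∃ H : Subgroup G, H.Characteristic ∧ H.index ≤ f n ∧
        Nat.card ↥⁅H, H⁆ ≤ f n := by
  refine ⟨fun n => max (2 * n ^ 2) (neumannBound (n ^ 2)), fun n G _ _ α hα hn => ?_⟩
  obtain ⟨H, h_char, h_index, h_commutator⟩ :=
    finite_group_involutory_automorphism_finiteByAbelianByFinite_general (α := α.toMonoidHom) hα hn
  exact ⟨H, h_char, le_max_of_le_left h_index, le_max_of_le_right h_commutator⟩
end
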